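/- Let m > 1 be an integer and k ∈ ℤ∖mℤ. Then the Fricke function f_{(k/m, 0)} is holomorphic on ℍ, satisfies f_{(k/m,0)}(γτ) = f_{(k/m,0)}(τ) for every γ ∈ Γ^1(m) and τ ∈ ℍ, and all of its Fourier coefficients (in its expansion in powers of q^{1/m}, q = e^{2πiτ}) are rational numbers. -/

import Mathlib

open Complex UpperHalfPlane Matrix MatrixGroups CongruenceSubgroup
open scoped UpperHalfPlane Manifold Real

noncomputable section

/-- `N·τ` as a point of the upper half-plane (junk value `τ` if `N = 0`). -/
def hsmul (N : ℕ) (τ : UpperHalfPlane) : UpperHalfPlane :=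
  if hN : 0 < N then
    ⟨(N : ℂ) * τ, by
      have h0 : (0 : ℝ) < (N : ℝ) := by exact_mod_cast hN
      simpa [Complex.mul_im] using mul_pos h0 τ.2⟩
  else τ

/-- The Siegel function `g_r(τ)` given by its infinite product expansion. -/
def siegel (r : ℚ × ℚ) (τ : ℍ) : ℂ :=
  -Complex.exp ((Real.pi : ℂ) * Complex.I * (((r.1 : ℂ) ^ 2 - (r.1 : ℂ) + 1 / 6) * τ)) *
    Complex.exp ((Real.pi : ℂ) * Complex.I * (r.2 : ℂ) * ((r.1 : ℂ) - 1)) *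
    (1 - Complex.exp (2 * (Real.pi : ℂ) * Complex.I * ((r.1 : ℂ) * τ + (r.2 : ℂ)))) *
    ∏' n : ℕ,
      ((1 - Complex.exp (2 * (Real.pi : ℂ) * Complex.I *
          (((n : ℂ) + 1 + (r.1 : ℂ)) * τ + (r.2 : ℂ)))) *
       (1 - Complex.exp (2 * (Real.pi : ℂ) * Complex.I *
          (((n : ℂ) + 1 - (r.1 : ℂ)) * τ - (r.2 : ℂ)))))

/-- The lattice point `ω = m·τ + n` attached to a pair `(m,n) ∈ ℤ²`. -/
def lat (τ : ℍ) (p : ℤ × ℤ) : ℂ := (p.1 : ℂ) * τ + (p.2 : ℂ)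

/-- `g₂(τ) = 60 ∑_{ω ∈ L_τ ∖ {0}} ω⁻⁴`. -/
def g2C (τ : ℍ) : ℂ := 60 * ∑' p : {p : ℤ × ℤ // p ≠ 0}, ((lat τ p.1) ^ 4)⁻¹

/-- `g₃(τ) = 140 ∑_{ω ∈ L_τ ∖ {0}} ω⁻⁶`. -/
def g3C (τ : ℍ) : ℂ := 140 * ∑' p : {p : ℤ × ℤ // p ≠ 0}, ((lat τ p.1) ^ 6)⁻¹

/-- The discriminant `Δ(τ) = g₂(τ)³ - 27 g₃(τ)²`. -/
def discC (τ : ℍ) : ℂ := g2C τ ^ 3 - 27 * g3C τ ^ 2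

/-- The Weierstrass `℘`-function relative to the lattice `L_τ = ℤτ + ℤ`. -/
def wpC (z : ℂ) (τ : ℍ) : ℂ :=
  (z ^ 2)⁻¹ + ∑' p : {p : ℤ × ℤ // p ≠ 0}, (((z - lat τ p.1) ^ 2)⁻¹ - ((lat τ p.1) ^ 2)⁻¹)

/-- The Fricke function `f_r(τ)`. -/
def fricke (r : ℚ × ℚ) (τ : ℍ) : ℂ :=
  -(2 ^ 7 * 3 ^ 5) * (g2C τ * g3C τ / discC τ) * wpC ((r.1 : ℂ) * τ + (r.2 : ℂ)) τ

/-- The elliptic modular `j`-invariant. -/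
def jinv (τ : ℍ) : ℂ := 1728 * g2C τ ^ 3 / discC τ

/-- The Dedekind eta function. -/
def etaC (τ : ℍ) : ℂ :=
  (Real.sqrt (2 * Real.pi) : ℂ) * Complex.exp (2 * (Real.pi : ℂ) * Complex.I / 16) *
    Complex.exp (2 * (Real.pi : ℂ) * Complex.I * τ / 24) *
    ∏' n : ℕ, (1 - Complex.exp (2 * (Real.pi : ℂ) * Complex.I * ((n : ℂ) + 1) * τ))

/-- `r ∈ ℚ² ∖ ℤ²`. -/
def NonIntegral (r : ℚ × ℚ) : Prop := ¬ ∃ a b : ℤ, r = ((a : ℚ), (b : ℚ))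

/-- `r ∈ (1/N)ℤ²`. -/
def InDen (N : ℕ) (r : ℚ × ℚ) : Prop := ∃ a b : ℤ, r = ((a : ℚ) / N, (b : ℚ) / N)

/-- Membership in `Γ^1(N)`: `a ≡ d ≡ 1` and `b ≡ 0 (mod N)`. -/
def GammaUpper (N : ℕ) (γ : SL(2, ℤ)) : Prop :=
  ((γ 0 0 : ℤ) : ZMod N) = 1 ∧ ((γ 1 1 : ℤ) : ZMod N) = 1 ∧ ((γ 0 1 : ℤ) : ZMod N) = 0

/-- The transpose action `ᵗγ r = (a r₁ + c r₂, b r₁ + d r₂)` of `γ = [[a,b],[c,d]]`. -/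
def tAct (γ : SL(2, ℤ)) (r : ℚ × ℚ) : ℚ × ℚ :=
  ((γ 0 0 : ℚ) * r.1 + (γ 1 0 : ℚ) * r.2, (γ 0 1 : ℚ) * r.1 + (γ 1 1 : ℚ) * r.2)

/-- The power `q^{n/d} = e^{2πi(n/d)τ}`. -/
def qpow (d : ℕ) (n : ℤ) (τ : ℍ) : ℂ :=
  Complex.exp (2 * (Real.pi : ℂ) * Complex.I * ((n : ℂ) / (d : ℂ)) * τ)

/-- `h` is a weakly holomorphic modular function for `Γ₁(N)` with rational
Fourier coefficients: holomorphic on `ℍ`, `Γ₁(N)`-invariant, with a convergent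
`q`-expansion at `i∞` having rational coefficients, and meromorphic at every cusp. -/
def IsWeaklyHolo1 (N : ℕ) (h : ℍ → ℂ) : Prop :=
  MDifferentiable 𝓘(ℂ) 𝓘(ℂ) h ∧
  (∀ γ ∈ Gamma1 N, ∀ τ : ℍ, h (γ • τ) = h τ) ∧
  (∃ n₀ : ℤ, ∃ c : ℕ → ℚ,
    ∀ τ : ℍ, HasSum (fun n : ℕ => (c n : ℂ) * qpow 1 (n₀ + n) τ) (h τ)) ∧
  (∀ γ : SL(2, ℤ), ∃ n₀ : ℤ, ∃ c : ℕ → ℂ,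
    ∀ τ : ℍ, HasSum (fun n : ℕ => c n * qpow N (n₀ + n) τ) (h (γ • τ)))

/-- `h` is a weakly holomorphic modular function for `Γ^1(N)` with rational
Fourier coefficients (the expansion at `i∞` being in powers of `q^{1/N}`). -/
def IsWeaklyHoloUp (N : ℕ) (h : ℍ → ℂ) : Prop :=
  MDifferentiable 𝓘(ℂ) 𝓘(ℂ) h ∧
  (∀ γ : SL(2, ℤ), GammaUpper N γ → ∀ τ : ℍ, h (γ • τ) = h τ) ∧
  (∃ n₀ : ℤ, ∃ c : ℕ → ℚ,
    ∀ τ : ℍ, HasSum (fun n : ℕ => (c n : ℂ) * qpow N (n₀ + n) τ) (h τ)) ∧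
  (∀ γ : SL(2, ℤ), ∃ n₀ : ℤ, ∃ c : ℕ → ℂ,
    ∀ τ : ℍ, HasSum (fun n : ℕ => c n * qpow N (n₀ + n) τ) (h (γ • τ)))

/-- The Weierstrass-unit generator
`f^1_{m,N} = (f_{(1/N,0)} - f_{(1/m,0)})/(f_{(2/m,0)} - f_{(1/m,0)})`. -/
def fUnit (m N : ℕ) (τ : ℍ) : ℂ :=
  (fricke ((1 : ℚ) / N, 0) τ - fricke ((1 : ℚ) / m, 0) τ) /
    (fricke ((2 : ℚ) / m, 0) τ - fricke ((1 : ℚ) / m, 0) τ)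

lemma hasSum_congr_aux {ι : Type*} {f g : ι → ℂ} {a : ℂ} (h : ∀ n, f n = g n) :
    HasSum f a ↔ HasSum g a := by
  rw [show f = g from funext h]

/-! ### Convergent power series with rational coefficients -/

/-- Convergence of a rational power series on the open unit disc. -/
def PSConv (P : PowerSeries ℚ) : Prop :=
  ∀ Q : ℂ, ‖Q‖ < 1 → Summable fun n : ℕ => ((PowerSeries.coeff n P : ℚ) : ℂ) * Q ^ n

/-- Value of a rational power series. -/
def psEval (P : PowerSeries ℚ) (Q : ℂ) : ℂ :=
  ∑' n : ℕ, ((PowerSeries.coeff n P : ℚ) : ℂ) * Q ^ n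

lemma PSConv.hasSum {P : PowerSeries ℚ} (h : PSConv P) {Q : ℂ} (hQ : ‖Q‖ < 1) :
    HasSum (fun n : ℕ => ((PowerSeries.coeff n P : ℚ) : ℂ) * Q ^ n) (psEval P Q) :=
  (h Q hQ).hasSum

lemma PSConv.mul_hasSum {P R : PowerSeries ℚ} (hP : PSConv P) (hR : PSConv R) {Q : ℂ}
    (hQ : ‖Q‖ < 1) :
    HasSum (fun n : ℕ => ((PowerSeries.coeff n (P * R) : ℚ) : ℂ) * Q ^ n)
      (psEval P Q * psEval R Q) := by
  have h1 := (hP Q hQ).norm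
  have h2 := (hR Q hQ).norm
  have h3 := summable_norm_sum_mul_antidiagonal_of_summable_norm h1 h2
  have h4 := tsum_mul_tsum_eq_tsum_sum_antidiagonal_of_summable_norm h1 h2
  have h5 : (fun n : ℕ => ((PowerSeries.coeff n (P * R) : ℚ) : ℂ) * Q ^ n) =
      fun n => ∑ kl ∈ Finset.HasAntidiagonal.antidiagonal n,
        (((PowerSeries.coeff kl.1 P : ℚ) : ℂ) * Q ^ kl.1) *
          (((PowerSeries.coeff kl.2 R : ℚ) : ℂ) * Q ^ kl.2) := by
    funext n
    rw [PowerSeries.coeff_mul]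
    push_cast
    rw [Finset.sum_mul]
    refine Finset.sum_congr rfl fun kl hkl => ?_
    rw [← Finset.HasAntidiagonal.mem_antidiagonal.mp hkl, pow_add]
    ring
  rw [h5]
  unfold psEval
  rw [h4]
  exact h3.of_norm.hasSum

lemma PSConv.mul {P R : PowerSeries ℚ} (hP : PSConv P) (hR : PSConv R) : PSConv (P * R) :=
  fun _ hQ => (hP.mul_hasSum hR hQ).summable

lemma psEval_mul {P R : PowerSeries ℚ} (hP : PSConv P) (hR : PSConv R) {Q : ℂ}
    (hQ : ‖Q‖ < 1) : psEval (P * R) Q = psEval P Q * psEval R Q :=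
  (hP.mul_hasSum hR hQ).tsum_eq

lemma PSConv.sub {P R : PowerSeries ℚ} (hP : PSConv P) (hR : PSConv R) : PSConv (P - R) := by
  intro Q hQ
  refine ((hP Q hQ).sub (hR Q hQ)).congr fun n => ?_
  simp [sub_mul]

lemma psEval_sub {P R : PowerSeries ℚ} (hP : PSConv P) (hR : PSConv R) {Q : ℂ}
    (hQ : ‖Q‖ < 1) : psEval (P - R) Q = psEval P Q - psEval R Q := by
  unfold psEval
  rw [← (hP Q hQ).tsum_sub (hR Q hQ)]
  refine tsum_congr fun n => ?_
  simp [sub_mul]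

lemma psConst_hasSum (a : ℚ) (Q : ℂ) :
    HasSum (fun n : ℕ => ((PowerSeries.coeff n (PowerSeries.C a) : ℚ) : ℂ) * Q ^ n) a := by
  convert hasSum_single (f := fun n : ℕ =>
    ((PowerSeries.coeff n (PowerSeries.C a) : ℚ) : ℂ) * Q ^ n) 0 ?_ using 1
  · simp
  · intro n hn
    simp [PowerSeries.coeff_C, hn]

lemma PSConv.const (a : ℚ) : PSConv (PowerSeries.C a) := fun Q _ => (psConst_hasSum a Q).summable

lemma psEval_const (a : ℚ) (Q : ℂ) : psEval (PowerSeries.C a) Q = a := (psConst_hasSum a Q).tsum_eq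

lemma hasFPowerSeriesOnBall_of_hasSum {a : ℕ → ℂ} {f : ℂ → ℂ}
    (h : ∀ Q : ℂ, ‖Q‖ < 1 → HasSum (fun n => a n * Q ^ n) (f Q)) :
    HasFPowerSeriesOnBall f (FormalMultilinearSeries.ofScalars ℂ a) 0 1 := by
  refine ⟨?_, by norm_num, ?_⟩
  · refine ENNReal.le_of_forall_nnreal_lt fun r hr => ?_
    refine FormalMultilinearSeries.le_radius_of_summable _ ?_
    have hr' : (r : ℝ) < 1 := by exact_mod_cast hr
    have := (h (r : ℝ) (by simpa using hr')).summable.norm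
    simpa [FormalMultilinearSeries.ofScalars_norm] using this
  · intro y hy
    have hy' : ‖y‖ < 1 := by
      have h : ‖y‖₊ < 1 := by
        simpa [Metric.mem_eball, edist_zero_right, enorm_eq_nnnorm] using hy
      exact_mod_cast h
    simpa [FormalMultilinearSeries.ofScalars_apply_eq, mul_comm] using h y hy'

lemma PSConv.hasFPS {P : PowerSeries ℚ} (hP : PSConv P) :
    HasFPowerSeriesOnBall (psEval P)
      (FormalMultilinearSeries.ofScalars ℂ fun n => ((PowerSeries.coeff n P : ℚ) : ℂ)) 0 1 :=
  hasFPowerSeriesOnBall_of_hasSum fun _ hQ => hP.hasSum hQ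

lemma eball_one_eq : Metric.eball (0 : ℂ) 1 = Metric.ball 0 1 := by
  have := Metric.eball_ofReal (x := (0:ℂ)) (ε := 1)
  simpa using this

lemma PSConv.differentiableOn {P : PowerSeries ℚ} (hP : PSConv P) :
    DifferentiableOn ℂ (psEval P) (Metric.ball 0 1) := by
  rw [← eball_one_eq]
  exact hP.hasFPS.differentiableOn

lemma coeff_unique {a b : ℕ → ℂ} {f : ℂ → ℂ}
    (ha : ∀ Q : ℂ, ‖Q‖ < 1 → HasSum (fun n => a n * Q ^ n) (f Q))
    (hb : ∀ Q : ℂ, ‖Q‖ < 1 → HasSum (fun n => b n * Q ^ n) (f Q)) : a = b := by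
  have h := (hasFPowerSeriesOnBall_of_hasSum ha).hasFPowerSeriesAt.eq_formalMultilinearSeries
    (hasFPowerSeriesOnBall_of_hasSum hb).hasFPowerSeriesAt
  exact FormalMultilinearSeries.ofScalars_series_injective ℂ ℂ h

lemma PSConv.inv_hasSum {P : PowerSeries ℚ} (hP : PSConv P)
    (h0 : ∀ Q : ℂ, ‖Q‖ < 1 → psEval P Q ≠ 0) {Q : ℂ} (hQ : ‖Q‖ < 1) :
    HasSum (fun n : ℕ => ((PowerSeries.coeff n P⁻¹ : ℚ) : ℂ) * Q ^ n) (psEval P Q)⁻¹ := by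
  have hd : DifferentiableOn ℂ (fun Q => (psEval P Q)⁻¹) (Metric.ball 0 1) :=
    hP.differentiableOn.inv fun Q hQ => h0 Q (by simpa using hQ)
  -- the Taylor coefficients
  obtain ⟨b, hb⟩ : ∃ b : ℕ → ℂ, ∀ Q : ℂ, ‖Q‖ < 1 →
      HasSum (fun n => b n * Q ^ n) (psEval P Q)⁻¹ := by
    refine ⟨fun n => (n.factorial : ℂ)⁻¹ * iteratedDeriv n (fun Q => (psEval P Q)⁻¹) 0, ?_⟩
    intro Q hQ
    have := Complex.hasSum_taylorSeries_on_ball hd (z := Q) (by simpa using hQ)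
    refine (hasSum_congr_aux fun n => ?_).mp this
    simp [smul_eq_mul]
    ring
  have hc0 : PowerSeries.constantCoeff P ≠ 0 := by
    intro h
    apply h0 0 (by simp)
    have h1 : psEval P 0 = ((PowerSeries.coeff 0 P : ℚ) : ℂ) * (0:ℂ) ^ 0 :=
      tsum_eq_single 0 (fun n hn => by simp [hn])
    rw [h1]
    simp [h]
  let B : PowerSeries ℂ := PowerSeries.mk b
  have hprod : PowerSeries.map (algebraMap ℚ ℂ) P * B = 1 := by
    have : (fun n => PowerSeries.coeff n (PowerSeries.map (algebraMap ℚ ℂ) P * B)) =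
        fun n => PowerSeries.coeff n (1 : PowerSeries ℂ) := by
      refine coeff_unique (f := fun _ => 1) ?_ ?_
      · intro Q hQ
        have h1 := (hP Q hQ).norm
        have h2 := (hb Q hQ).summable.norm
        have h3 := summable_norm_sum_mul_antidiagonal_of_summable_norm h1 h2
        have h4 := tsum_mul_tsum_eq_tsum_sum_antidiagonal_of_summable_norm h1 h2
        have h6 := h3.of_norm.hasSum
        rw [← h4, (hb Q hQ).tsum_eq, (hP.hasSum hQ).tsum_eq, mul_inv_cancel₀ (h0 Q hQ)] at h6
        refine (hasSum_congr_aux fun n => ?_).mpr h6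
        rw [PowerSeries.coeff_mul, Finset.sum_mul]
        refine Finset.sum_congr rfl fun kl hkl => ?_
        rw [← Finset.HasAntidiagonal.mem_antidiagonal.mp hkl, pow_add]
        simp [B]
        ring
      · intro Q hQ
        convert hasSum_single (f := fun n : ℕ =>
          PowerSeries.coeff n (1 : PowerSeries ℂ) * Q ^ n) 0 ?_ using 1
        · simp
        · intro n hn
          simp [PowerSeries.coeff_one, hn]
    ext n
    exact congrFun this n
  have hinv : PowerSeries.map (algebraMap ℚ ℂ) P * PowerSeries.map (algebraMap ℚ ℂ) P⁻¹ = 1 := by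
    rw [← map_mul, PowerSeries.mul_inv_cancel P hc0, map_one]
  have hB : B = PowerSeries.map (algebraMap ℚ ℂ) P⁻¹ := by
    have h : B * (PowerSeries.map (algebraMap ℚ ℂ) P) = 1 := by rw [mul_comm]; exact hprod
    exact left_inv_eq_right_inv h hinv
  convert hb Q hQ using 2 with n
  have := congrArg (PowerSeries.coeff n) hB
  simp [B] at this
  rw [this]

lemma PSConv.inv {P : PowerSeries ℚ} (hP : PSConv P)
    (h0 : ∀ Q : ℂ, ‖Q‖ < 1 → psEval P Q ≠ 0) : PSConv P⁻¹ :=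
  fun _ hQ => (hP.inv_hasSum h0 hQ).summable

lemma psEval_inv {P : PowerSeries ℚ} (hP : PSConv P)
    (h0 : ∀ Q : ℂ, ‖Q‖ < 1 → psEval P Q ≠ 0) {Q : ℂ} (hQ : ‖Q‖ < 1) :
    psEval P⁻¹ Q = (psEval P Q)⁻¹ := (hP.inv_hasSum h0 hQ).tsum_eq

/-- Substituting `X ^ m` for `X`. -/
def psExpand (m : ℕ) (P : PowerSeries ℚ) : PowerSeries ℚ :=
  PowerSeries.mk fun n => if m ∣ n then PowerSeries.coeff (n / m) P else 0

lemma psExpand_hasSum {m : ℕ} (hm : 0 < m) {P : PowerSeries ℚ} (hP : PSConv P) {Q : ℂ}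
    (hQ : ‖Q‖ < 1) :
    HasSum (fun n : ℕ => ((PowerSeries.coeff n (psExpand m P) : ℚ) : ℂ) * Q ^ n)
      (psEval P (Q ^ m)) := by
  have hQm : ‖Q ^ m‖ < 1 := by
    rw [norm_pow]; exact pow_lt_one₀ (norm_nonneg _) hQ hm.ne'
  have hinj : Function.Injective fun n : ℕ => m * n := fun a b h => Nat.eq_of_mul_eq_mul_left hm h
  rw [← hinj.hasSum_iff]
  · convert hP.hasSum hQm using 2 with n
    simp [psExpand, pow_mul, hm]
  · intro n hn
    have : ¬ m ∣ n := fun ⟨c, hc⟩ => hn ⟨c, hc.symm⟩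
    simp [psExpand, this]

lemma PSConv.expand {m : ℕ} (hm : 0 < m) {P : PowerSeries ℚ} (hP : PSConv P) :
    PSConv (psExpand m P) := fun _ hQ => (psExpand_hasSum hm hP hQ).summable

lemma psEval_expand {m : ℕ} (hm : 0 < m) {P : PowerSeries ℚ} (hP : PSConv P) {Q : ℂ}
    (hQ : ‖Q‖ < 1) : psEval (psExpand m P) Q = psEval P (Q ^ m) :=
  (psExpand_hasSum hm hP hQ).tsum_eq

/-- Double series. -/
def psFam (a : ℤ × ℕ → ℚ) (e : ℤ × ℕ → ℕ) : PowerSeries ℚ :=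
  PowerSeries.mk fun N =>
    ∑ p ∈ (Finset.Icc (-((N : ℤ) + 1)) (N + 1)) ×ˢ Finset.range (N + 2),
      if e p = N then a p else 0

lemma summable_fam {a : ℤ × ℕ → ℚ} {e : ℤ × ℕ → ℕ} (ha : ∀ p, |a p| ≤ p.2)
    (he : ∀ p, a p ≠ 0 → p.2 + p.1.natAbs ≤ e p + 1) {Q : ℂ} (hQ0 : Q ≠ 0) (hQ : ‖Q‖ < 1) :
    Summable fun p : ℤ × ℕ => (a p : ℂ) * Q ^ (e p) := by
  have hx : 0 < ‖Q‖ := norm_pos_iff.mpr hQ0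
  have s1 : Summable fun n : ℕ => (n : ℝ) * ‖Q‖ ^ n := by
    simpa using summable_pow_mul_geometric_of_norm_lt_one 1 (r := ‖Q‖) (by simpa using hQ)
  have s2 : Summable fun l : ℤ => ‖Q‖ ^ l.natAbs := by
    have hg := summable_geometric_of_lt_one hx.le hQ
    exact Summable.of_nat_of_neg (by simpa using hg) (by simpa using hg)
  have s3 := (s2.mul_of_nonneg s1 (fun _ => by positivity) (fun _ => by positivity)).mul_right
    (‖Q‖⁻¹)
  refine Summable.of_norm_bounded s3 fun p => ?_
  by_cases h : a p = 0
  · simp only [h]; simp; positivity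
  rw [norm_mul, norm_pow]
  have h1 : ‖((a p : ℚ) : ℂ)‖ ≤ p.2 := by
    rw [show ((a p : ℚ) : ℂ) = (((a p : ℚ) : ℝ) : ℂ) by push_cast; rfl, Complex.norm_real,
      Real.norm_eq_abs]
    exact_mod_cast ha p
  have h2 : ‖Q‖ ^ (e p) ≤ ‖Q‖ ^ p.2 * ‖Q‖ ^ p.1.natAbs * ‖Q‖⁻¹ := by
    rw [← pow_add, ← div_eq_mul_inv, le_div_iff₀ hx, ← pow_succ]
    exact pow_le_pow_of_le_one hx.le hQ.le (he p h)
  calc _ ≤ (p.2 : ℝ) * (‖Q‖ ^ p.2 * ‖Q‖ ^ p.1.natAbs * ‖Q‖⁻¹) := by gcongr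
    _ = _ := by ring

lemma psFam_hasSum {a : ℤ × ℕ → ℚ} {e : ℤ × ℕ → ℕ} (ha : ∀ p, |a p| ≤ p.2)
    (he : ∀ p, a p ≠ 0 → p.2 + p.1.natAbs ≤ e p + 1) {Q : ℂ} (hQ0 : Q ≠ 0) (hQ : ‖Q‖ < 1) :
    HasSum (fun n : ℕ => ((PowerSeries.coeff n (psFam a e) : ℚ) : ℂ) * Q ^ n)
      (∑' p : ℤ × ℕ, (a p : ℂ) * Q ^ (e p)) := by
  have h := (summable_fam ha he hQ0 hQ).hasSum.tsum_fiberwise e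
  refine (hasSum_congr_aux fun N => ?_).mpr h
  rw [tsum_subtype (e ⁻¹' {N}) (fun p : ℤ × ℕ => (a p : ℂ) * Q ^ (e p)),
    tsum_eq_sum (s := (Finset.Icc (-((N : ℤ) + 1)) (N + 1)) ×ˢ Finset.range (N + 2))]
  · simp only [psFam, PowerSeries.coeff_mk]
    push_cast
    rw [Finset.sum_mul]
    refine Finset.sum_congr rfl fun p _ => ?_
    by_cases hp : e p = N
    · simp [hp]
    · simp [hp]
  · intro p hp
    by_cases hpN : e p = N
    · by_cases hz : a p = 0
      · simp [hz]
      · exfalso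
        have := he p hz
        apply hp
        simp only [Finset.mem_product, Finset.mem_Icc, Finset.mem_range]
        omega
    · simp [hpN]

lemma PSConv.of_punctured {P : PowerSeries ℚ} (h : ∀ Q : ℂ, Q ≠ 0 → ‖Q‖ < 1 →
    Summable fun n : ℕ => ((PowerSeries.coeff n P : ℚ) : ℂ) * Q ^ n) : PSConv P := by
  intro Q hQ
  by_cases h0 : Q = 0
  · refine summable_of_ne_finset_zero (s := {0}) fun n hn => ?_
    have : n ≠ 0 := by simpa using hn
    simp [h0, this]
  · exact h Q h0 hQ

/-! ### The Eisenstein part -/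

/-- The nome `q = e^{2πiτ}`. -/
def nome (τ : ℍ) : ℂ := Complex.exp (2 * (Real.pi : ℂ) * Complex.I * τ)

lemma nome_eq (τ : ℍ) : nome τ = Function.Periodic.qParam 1 τ := by
  simp [nome, Function.Periodic.qParam]

lemma norm_nome (τ : ℍ) : ‖nome τ‖ < 1 := UpperHalfPlane.norm_exp_two_pi_I_lt_one τ

lemma nome_ne (τ : ℍ) : nome τ ≠ 0 := Complex.exp_ne_zero _

lemma exists_nome {Q : ℂ} (h0 : Q ≠ 0) (h1 : ‖Q‖ < 1) : ∃ τ : ℍ, nome τ = Q := by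
  have him : 0 < (Function.Periodic.invQParam 1 Q).im := by
    rw [Function.Periodic.im_invQParam]
    have := Real.log_neg (norm_pos_iff.mpr h0) h1
    have hpi := Real.pi_pos
    rw [neg_div, neg_mul]
    have : 1 / (2 * π) * Real.log ‖Q‖ < 0 := mul_neg_of_pos_of_neg (by positivity) this
    linarith
  refine ⟨⟨_, him⟩, ?_⟩
  rw [nome_eq]
  exact Function.Periodic.qParam_right_inv one_ne_zero h0

lemma PSConv.of_nome {P : PowerSeries ℚ} {f : ℍ → ℂ} (h : ∀ τ : ℍ,
    HasSum (fun n : ℕ => ((PowerSeries.coeff n P : ℚ) : ℂ) * nome τ ^ n) (f τ)) : PSConv P := by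
  refine PSConv.of_punctured fun Q h0 h1 => ?_
  obtain ⟨τ, rfl⟩ := exists_nome h0 h1
  exact (h τ).summable

/-- Rational `q`-expansion of the normalised Eisenstein series. -/
def psE (k : ℕ) : PowerSeries ℚ :=
  PowerSeries.mk fun n => if n = 0 then 1 else
    -(2 * k / bernoulli k) * (ArithmeticFunction.sigma (k - 1) n : ℚ)

lemma psE_hasSum {k : ℕ} (hk : 3 ≤ k) (hk2 : Even k) (τ : ℍ) :
    HasSum (fun n : ℕ => ((PowerSeries.coeff n (psE k) : ℚ) : ℂ) * nome τ ^ n)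
      (ModularForm.E hk τ) := by
  have h := UpperHalfPlane.hasSum_qExpansion (h := 1) (f := ModularForm.E hk) one_pos
    (SlashInvariantFormClass.periodic_comp_ofComplex _ one_mem_strictPeriods_SL)
    (ModularFormClass.holo _) (ModularFormClass.bdd_at_infty _) τ
  refine (hasSum_congr_aux fun n => ?_).mpr h
  rw [EisensteinSeries.E_qExpansion_coeff hk hk2, nome_eq, smul_eq_mul, psE,
    PowerSeries.coeff_mk]
  split_ifs <;> push_cast <;> rfl

lemma psE_conv {k : ℕ} (hk : 3 ≤ k) (hk2 : Even k) : PSConv (psE k) :=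
  PSConv.of_nome (psE_hasSum hk hk2)

lemma psE_eval {k : ℕ} (hk : 3 ≤ k) (hk2 : Even k) (τ : ℍ) :
    psEval (psE k) (nome τ) = ModularForm.E hk τ := (psE_hasSum hk hk2 τ).tsum_eq

lemma bern4 : bernoulli 4 = -1 / 30 := by
  rw [bernoulli_eq_bernoulli'_of_ne_one (by norm_num), bernoulli'_four]

lemma bern6 : bernoulli 6 = 1 / 42 := by
  rw [bernoulli_eq_bernoulli'_of_ne_one (by norm_num), bernoulli'_def]
  have : Nat.choose 6 2 = 15 := by decide
  have : Nat.choose 6 4 = 15 := by decide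
  have h5 : bernoulli' 5 = 0 := bernoulli'_eq_zero_of_odd (by decide) (by norm_num)
  norm_num [Finset.sum_range_succ, Finset.sum_range_zero, *]

/-- `E₄³ - E₆²`. -/
def psD : PowerSeries ℚ := psE 4 * psE 4 * psE 4 - psE 6 * psE 6

lemma ev4 : Even 4 := by decide
lemma ev6 : Even 6 := by decide

lemma psD_conv : PSConv psD :=
  (((psE_conv (by norm_num) ev4).mul (psE_conv (by norm_num) ev4)).mul
    (psE_conv (by norm_num) ev4)).sub ((psE_conv (by norm_num) ev6).mul
    (psE_conv (by norm_num) ev6))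

lemma psD_eval (τ : ℍ) : psEval psD (nome τ) =
    ModularForm.E₄ τ ^ 3 - ModularForm.E₆ τ ^ 2 := by
  have c4 := psE_conv (k := 4) (by norm_num) ev4
  have c6 := psE_conv (k := 6) (by norm_num) ev6
  have hq := norm_nome τ
  rw [psD, psEval_sub ((c4.mul c4).mul c4) (c6.mul c6) hq, psEval_mul (c4.mul c4) c4 hq,
    psEval_mul c4 c4 hq, psEval_mul c6 c6 hq, psE_eval (k := 4) (by norm_num) ev4,
    psE_eval (k := 6) (by norm_num) ev6]
  ring

lemma psD_coeff_zero : PowerSeries.coeff 0 psD = 0 := by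
  simp [psD, psE, PowerSeries.coeff_mul]

lemma psD_coeff_one : PowerSeries.coeff 1 psD = 1728 := by
  norm_num [psD, psE, PowerSeries.coeff_mul, Finset.Nat.antidiagonal_succ, bern4, bern6]

/-- `(E₄³ - E₆²)/q`. -/
def psD1 : PowerSeries ℚ := PowerSeries.mk fun n => PowerSeries.coeff (n + 1) psD

lemma psD1_hasSum (τ : ℍ) :
    HasSum (fun n : ℕ => ((PowerSeries.coeff n psD1 : ℚ) : ℂ) * nome τ ^ n)
      ((ModularForm.E₄ τ ^ 3 - ModularForm.E₆ τ ^ 2) / nome τ) := by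
  have h := psD_conv.hasSum (norm_nome τ)
  rw [psD_eval, ← hasSum_nat_add_iff' 1] at h
  simp [psD_coeff_zero, -PowerSeries.coeff_zero_eq_constantCoeff] at h
  refine (hasSum_congr_aux fun n => ?_).mpr (h.div_const (nome τ))
  have := nome_ne τ
  simp only [psD1, PowerSeries.coeff_mk]
  rw [pow_succ]
  field_simp

lemma psD1_conv : PSConv psD1 := PSConv.of_nome psD1_hasSum

lemma E_disc_ne (τ : ℍ) : ModularForm.E₄ τ ^ 3 - ModularForm.E₆ τ ^ 2 ≠ 0 := by
  intro h
  apply ModularForm.discriminant_ne_zero τ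
  rw [ModularForm.discriminant_eq_E₄_cube_sub_E₆_sq, h, zero_div]

lemma psD1_ne (Q : ℂ) (hQ : ‖Q‖ < 1) : psEval psD1 Q ≠ 0 := by
  by_cases h0 : Q = 0
  · have h1 : psEval psD1 0 = ((PowerSeries.coeff 0 psD1 : ℚ) : ℂ) * (0:ℂ) ^ 0 :=
      tsum_eq_single 0 (fun n hn => by simp [hn])
    rw [h0, h1, psD1, PowerSeries.coeff_mk, psD_coeff_one]
    norm_num
  · obtain ⟨τ, rfl⟩ := exists_nome h0 hQ
    rw [show psEval psD1 (nome τ) = _ from (psD1_hasSum τ).tsum_eq]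
    exact div_ne_zero (E_disc_ne τ) (nome_ne τ)

/-- Expansion of `q E₄ E₆ / (E₄³ - E₆²)`. -/
def psG : PowerSeries ℚ := psE 4 * psE 6 * psD1⁻¹

lemma psG_conv : PSConv psG :=
  ((psE_conv (by norm_num) ev4).mul (psE_conv (by norm_num) ev6)).mul (psD1_conv.inv psD1_ne)

lemma psG_eval (τ : ℍ) : psEval psG (nome τ) = nome τ * (ModularForm.E₄ τ *
    ModularForm.E₆ τ / (ModularForm.E₄ τ ^ 3 - ModularForm.E₆ τ ^ 2)) := by
  have c4 := psE_conv (k := 4) (by norm_num) ev4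
  have c6 := psE_conv (k := 6) (by norm_num) ev6
  have hq := norm_nome τ
  rw [psG, psEval_mul (c4.mul c6) (psD1_conv.inv psD1_ne) hq, psEval_mul c4 c6 hq,
    psEval_inv psD1_conv psD1_ne hq, psE_eval (k := 4) (by norm_num) ev4,
    psE_eval (k := 6) (by norm_num) ev6,
    show psEval psD1 (nome τ) = _ from (psD1_hasSum τ).tsum_eq]
  rw [inv_div]
  ring

/-- Sum over nonzero pairs as a sum over all pairs. -/
lemma tsum_ne_zero_eq (f : ℤ × ℤ → ℂ) (h : f 0 = 0) :
    ∑' p : {p : ℤ × ℤ // p ≠ 0}, f p.1 = ∑' p, f p := by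
  have := tsum_subtype_eq_of_support_subset (f := f) (s := {p | p ≠ 0}) (by
    intro p hp hp0
    apply hp
    rw [hp0, h])
  exact this

lemma lat_tsum_eq {k : ℕ} (hk : 3 ≤ k) (τ : ℍ) :
    ∑' p : {p : ℤ × ℤ // p ≠ 0}, ((lat τ p.1) ^ k)⁻¹ =
      2 * riemannZeta k * ModularForm.E hk τ := by
  rw [tsum_ne_zero_eq (fun p => ((lat τ p) ^ k)⁻¹) (by simp [lat]; omega)]
  have h := tsum_eisSummand_eq_riemannZeta_mul_eisensteinSeries hk τ
  have hE : ModularForm.E hk τ = (1 / 2 : ℂ) * eisensteinSeries (N := 1) 0 k τ := by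
    rw [show ModularForm.E hk τ = (1 / 2 : ℂ) • EisensteinSeries.eisensteinSeriesSIF (N := 1) 0 k τ
      from rfl, EisensteinSeries.eisensteinSeriesSIF_apply 0 k τ, smul_eq_mul]
  rw [hE, show 2 * riemannZeta k * ((1 / 2 : ℂ) * eisensteinSeries (N := 1) 0 k τ)
    = riemannZeta k * eisensteinSeries (N := 1) 0 k τ by ring, ← h,
    ← (finTwoArrowEquiv ℤ).symm.tsum_eq]
  refine tsum_congr fun p => ?_
  simp [EisensteinSeries.eisSummand, lat]

lemma zeta6 : riemannZeta 6 = (π : ℂ) ^ 6 / 945 := by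
  have := riemannZeta_two_mul_nat (k := 3) (by norm_num)
  norm_num [bern6, Nat.factorial] at this
  rw [this]
  ring

lemma g2_eq (τ : ℍ) : g2C τ = 4 * (π : ℂ) ^ 4 / 3 * ModularForm.E₄ τ := by
  rw [g2C, lat_tsum_eq (k := 4) (by norm_num)]
  have := riemannZeta_four
  push_cast
  rw [this]
  ring

lemma g3_eq (τ : ℍ) : g3C τ = 8 * (π : ℂ) ^ 6 / 27 * ModularForm.E₆ τ := by
  rw [g3C, lat_tsum_eq (k := 6) (by norm_num)]
  push_cast
  rw [zeta6]
  ring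

lemma gg_eq (τ : ℍ) : g2C τ * g3C τ / discC τ = (6 * (π : ℂ) ^ 2)⁻¹ * (nome τ)⁻¹ *
    psEval psG (nome τ) := by
  have h := E_disc_ne τ
  have hn := nome_ne τ
  have hpi : (π : ℂ) ≠ 0 := by exact_mod_cast Real.pi_ne_zero
  have hd : discC τ = 64 * (π : ℂ) ^ 12 / 27 *
      (ModularForm.E₄ τ ^ 3 - ModularForm.E₆ τ ^ 2) := by
    rw [discC, g2_eq, g3_eq]; ring
  rw [psG_eval, hd, g2_eq, g3_eq]
  field_simp
  ring

/-! ### The Weierstrass function -/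

lemma tau_im_ne (τ : ℍ) : (τ : ℂ).im ≠ 0 := τ.2.ne'

/-- The period pair `(τ, 1)`. -/
def tauPair (τ : ℍ) : PeriodPair where
  ω₁ := τ
  ω₂ := 1
  indep := by
    rw [LinearIndependent.pair_iff]
    intro s t h
    have h1 := congrArg Complex.im h
    simp at h1
    have hs : s = 0 := h1.resolve_right τ.2.ne'
    subst hs
    simpa using h

lemma tauPair_equiv (τ : ℍ) (p : ℤ × ℤ) :
    (((tauPair τ).latticeEquivProd.symm p : (tauPair τ).lattice) : ℂ) = lat τ p := by
  rw [PeriodPair.latticeEquiv_symm_apply]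
  simp [tauPair, lat]

lemma hasSum_wp (τ : ℍ) (z : ℂ) :
    HasSum (fun p : ℤ × ℤ => ((z - lat τ p) ^ 2)⁻¹ - ((lat τ p) ^ 2)⁻¹)
      ((tauPair τ).weierstrassP z) := by
  have h := (tauPair τ).hasSum_weierstrassP z
  rw [← (tauPair τ).latticeEquivProd.symm.toEquiv.hasSum_iff] at h
  refine h.congr_fun fun p => ?_
  simp [tauPair_equiv]

lemma wpC_eq (τ : ℍ) (z : ℂ) : wpC z τ = (tauPair τ).weierstrassP z := by
  have h := hasSum_wp τ z
  rw [wpC]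
  have h2 := h.summable.tsum_eq_add_tsum_ite 0
  rw [← h.tsum_eq, h2]
  have h3 := tsum_ne_zero_eq (fun p => if p = 0 then 0 else
    ((z - lat τ p) ^ 2)⁻¹ - ((lat τ p) ^ 2)⁻¹) (by simp)
  rw [← h3]
  congr 1
  · simp [lat]
  · refine tsum_congr fun p => ?_
    rw [if_neg p.2]

lemma wpC_add_lat (τ : ℍ) (z : ℂ) (p : ℤ × ℤ) : wpC (z + lat τ p) τ = wpC z τ := by
  rw [wpC_eq, wpC_eq, ← tauPair_equiv, PeriodPair.weierstrassP_add_coe]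

/-! ### Invariance -/

lemma den_ne (γ : SL(2, ℤ)) (τ : ℍ) : ((γ 1 0 : ℤ) : ℂ) * τ + ((γ 1 1 : ℤ) : ℂ) ≠ 0 := by
  have := UpperHalfPlane.denom_ne_zero (γ : GL (Fin 2) ℝ) τ
  simpa [UpperHalfPlane.denom] using this

/-- The action on lattice indices. -/
def latEquiv (γ : SL(2, ℤ)) : ℤ × ℤ ≃ ℤ × ℤ where
  toFun p := (p.1 * γ 0 0 + p.2 * γ 1 0, p.1 * γ 0 1 + p.2 * γ 1 1)
  invFun p := (p.1 * γ 1 1 - p.2 * γ 1 0, - p.1 * γ 0 1 + p.2 * γ 0 0)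
  left_inv p := by
    have h := Matrix.det_fin_two γ.1
    rw [γ.2] at h
    ext
    · linear_combination (-p.1) * h
    · linear_combination (-p.2) * h
  right_inv p := by
    have h := Matrix.det_fin_two γ.1
    rw [γ.2] at h
    ext
    · linear_combination (-p.1) * h
    · linear_combination (-p.2) * h

lemma lat_smul (γ : SL(2, ℤ)) (τ : ℍ) (p : ℤ × ℤ) : lat (γ • τ) p =
    lat τ (latEquiv γ p) / (((γ 1 0 : ℤ) : ℂ) * τ + ((γ 1 1 : ℤ) : ℂ)) := by
  have h := den_ne γ τ
  rw [lat, lat, UpperHalfPlane.coe_specialLinearGroup_apply]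
  simp only [latEquiv, Equiv.coe_fn_mk, algebraMap_int_eq, eq_intCast, Complex.ofReal_intCast]
  push_cast
  rw [eq_div_iff h, add_mul, mul_assoc, div_mul_cancel₀ _ h]
  ring

lemma eis_smul (k : ℕ) (hk : k ≠ 0) (γ : SL(2, ℤ)) (τ : ℍ) :
    ∑' p : {p : ℤ × ℤ // p ≠ 0}, ((lat (γ • τ) p.1) ^ k)⁻¹ =
      (((γ 1 0 : ℤ) : ℂ) * τ + ((γ 1 1 : ℤ) : ℂ)) ^ k *
        ∑' p : {p : ℤ × ℤ // p ≠ 0}, ((lat τ p.1) ^ k)⁻¹ := by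
  rw [tsum_ne_zero_eq (fun p => ((lat τ p) ^ k)⁻¹) (by simp [lat, hk]),
    tsum_ne_zero_eq (fun p => ((lat (γ • τ) p) ^ k)⁻¹) (by simp [lat, hk]),
    ← (latEquiv γ).tsum_eq (fun p => ((lat τ p) ^ k)⁻¹), ← tsum_mul_left]
  refine tsum_congr fun p => ?_
  rw [lat_smul, div_pow, inv_div, div_eq_mul_inv]

lemma wp_smul (γ : SL(2, ℤ)) (τ : ℍ) (z : ℂ) :
    wpC (z / (((γ 1 0 : ℤ) : ℂ) * τ + ((γ 1 1 : ℤ) : ℂ))) (γ • τ) =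
      (((γ 1 0 : ℤ) : ℂ) * τ + ((γ 1 1 : ℤ) : ℂ)) ^ 2 * wpC z τ := by
  rw [wpC_eq, wpC_eq, ← (hasSum_wp _ _).tsum_eq, ← (hasSum_wp _ _).tsum_eq,
    ← (latEquiv γ).tsum_eq (fun p => ((z - lat τ p) ^ 2)⁻¹ - ((lat τ p) ^ 2)⁻¹),
    ← tsum_mul_left]
  refine tsum_congr fun p => ?_
  rw [lat_smul, ← sub_div, div_pow, div_pow, inv_div, inv_div]
  ring

lemma fricke_inv (m : ℕ) (hm : 1 < m) (k : ℤ) (γ : SL(2, ℤ)) (hγ : GammaUpper m γ) (τ : ℍ) :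
    fricke ((k : ℚ) / m, 0) (γ • τ) = fricke ((k : ℚ) / m, 0) τ := by
  obtain ⟨h1, -, h3⟩ := hγ
  have hj := den_ne γ τ
  have hm0 : (m : ℂ) ≠ 0 := by exact_mod_cast (by omega : m ≠ 0)
  have e1 : ((γ 0 0 - 1 : ℤ) : ZMod m) = 0 := by push_cast; rw [h1, sub_self]
  rw [ZMod.intCast_zmod_eq_zero_iff_dvd] at e1
  rw [ZMod.intCast_zmod_eq_zero_iff_dvd] at h3
  obtain ⟨u, hu⟩ := e1
  obtain ⟨v, hv⟩ := h3
  have ha : ((γ 0 0 : ℤ) : ℂ) = m * u + 1 := by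
    have : γ 0 0 = m * u + 1 := by linarith
    rw [this]; push_cast; ring
  have hb : ((γ 0 1 : ℤ) : ℂ) = m * v := by rw [hv]; push_cast; ring
  have key : wpC (((k : ℂ) / m) * ((γ • τ : ℍ) : ℂ)) (γ • τ) =
      (((γ 1 0 : ℤ) : ℂ) * τ + ((γ 1 1 : ℤ) : ℂ)) ^ 2 * wpC (((k : ℂ) / m) * τ) τ := by
    rw [← wpC_add_lat τ _ (k * u, k * v), ← wp_smul]
    congr 1
    rw [UpperHalfPlane.coe_specialLinearGroup_apply]
    simp only [algebraMap_int_eq, eq_intCast, Complex.ofReal_intCast]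
    rw [ha, hb, lat]
    push_cast
    field_simp
    ring
  simp only [fricke]
  push_cast
  simp only [add_zero]
  rw [key]
  set j := ((γ 1 0 : ℤ) : ℂ) * τ + ((γ 1 1 : ℤ) : ℂ) with hjd
  have hg2 : g2C (γ • τ) = j ^ 4 * g2C τ := by
    rw [g2C, g2C, eis_smul 4 (by norm_num)]; ring
  have hg3 : g3C (γ • τ) = j ^ 6 * g3C τ := by
    rw [g3C, g3C, eis_smul 6 (by norm_num)]; ring
  have hd : discC (γ • τ) = j ^ 12 * discC τ := by
    rw [discC, discC, hg2, hg3]; ring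
  rw [hg2, hg3, hd]
  by_cases h0 : discC τ = 0
  · simp [h0]
  · field_simp

/-! ### The expansion of the Weierstrass function -/

/-- `q^{1/m}`. -/
def qq (m : ℕ) (τ : ℍ) : ℂ := qpow m 1 τ

lemma qq_ne (m : ℕ) (τ : ℍ) : qq m τ ≠ 0 := Complex.exp_ne_zero _

lemma qpow_eq (m : ℕ) (n : ℤ) (τ : ℍ) : qpow m n τ = qq m τ ^ n := by
  rw [qq, qpow, qpow, ← Complex.exp_int_mul]
  congr 1
  push_cast
  ring

lemma norm_qq {m : ℕ} (hm : 0 < m) (τ : ℍ) : ‖qq m τ‖ < 1 := by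
  rw [qq, qpow, Complex.norm_exp, Real.exp_lt_one_iff]
  have : (2 * (π : ℂ) * Complex.I * (((1 : ℤ) : ℂ) / (m : ℂ)) * τ) =
    ((2 * π / m : ℝ) : ℂ) * (Complex.I * τ) := by push_cast; ring
  rw [this, Complex.re_ofReal_mul]
  have h2 : (Complex.I * (τ : ℂ)).re = - τ.im := by simp
  rw [h2]
  have := τ.im_pos
  have : (0 : ℝ) < m := by exact_mod_cast hm
  have := Real.pi_pos
  have : 0 < 2 * π / m * τ.im := by positivity
  linarith

lemma qq_pow {m : ℕ} (hm : 0 < m) (τ : ℍ) : qq m τ ^ m = nome τ := by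
  have := qpow_eq m m τ
  rw [zpow_natCast] at this
  rw [← this, qpow, nome]
  have : (m : ℂ) ≠ 0 := by exact_mod_cast hm.ne'
  congr 1
  push_cast
  field_simp

lemma row_pos {m : ℕ} (hm : 0 < m) (τ : ℍ) {s : ℤ} (hs : 0 < s) :
    ∑' n : ℤ, (((s : ℂ) / m * τ + n) ^ 2)⁻¹ =
      -4 * (π : ℂ) ^ 2 * ∑' n : ℕ, (n : ℂ) * qq m τ ^ (s.natAbs * n) := by
  have him : 0 < ((s : ℂ) / m * τ).im := by
    have : ((s : ℂ) / m * τ) = ((s / m : ℝ) : ℂ) * τ := by push_cast; ring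
    rw [this, Complex.im_ofReal_mul]
    have h1 : (0 : ℝ) < m := by exact_mod_cast hm
    have h2 : (0 : ℝ) < s := by exact_mod_cast hs
    have h3 := τ.im_pos
    exact mul_pos (div_pos h2 h1) h3
  have h := EisensteinSeries.qExpansion_identity (k := 1) le_rfl ⟨_, him⟩
  simp only [one_div] at h
  have e : cexp (2 * π * Complex.I * ((s : ℂ) / m * τ)) = qq m τ ^ s.natAbs := by
    rw [← zpow_natCast, Int.natAbs_of_nonneg hs.le, ← qpow_eq, qpow]
    congr 1
    ring
  refine h.trans ?_
  have e2 : ((-2 * π * Complex.I) ^ (1 + 1) / (Nat.factorial 1 : ℂ)) = -4 * (π : ℂ) ^ 2 := by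
    simp only [Nat.factorial]
    push_cast
    linear_combination 4 * (π : ℂ) ^ 2 * Complex.I_sq
  rw [e2]
  congr 1
  refine tsum_congr fun n => ?_
  rw [pow_one, e, pow_mul]

lemma row_ne {m : ℕ} (hm : 0 < m) (τ : ℍ) {s : ℤ} (hs : s ≠ 0) :
    ∑' n : ℤ, (((s : ℂ) / m * τ + n) ^ 2)⁻¹ =
      -4 * (π : ℂ) ^ 2 * ∑' n : ℕ, (n : ℂ) * qq m τ ^ (s.natAbs * n) := by
  rcases hs.lt_or_gt with h | h
  · have := row_pos hm τ (s := -s) (by omega)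
    rw [Int.natAbs_neg] at this
    rw [← this, ← (Equiv.neg ℤ).tsum_eq]
    refine tsum_congr fun n => ?_
    simp only [Equiv.neg_apply]
    push_cast
    congr 1
    ring
  · exact row_pos hm τ h

lemma row_zero : ∑' n : ℤ, (((n : ℂ)) ^ 2)⁻¹ = (π : ℂ) ^ 2 / 3 := by
  have := two_mul_riemannZeta_eq_tsum_int_inv_pow_of_even (k := 2) le_rfl (by decide)
  push_cast at this
  simp only [one_div, riemannZeta_two] at this
  rw [← this]
  ring

lemma row_summable (τ : ℍ) (m : ℕ) (s : ℤ) :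
    Summable fun n : ℤ => (((s : ℂ) / m * τ + n) ^ 2)⁻¹ := by
  have := EisensteinSeries.linear_right_summable ((τ : ℂ) / m) s (k := 2) le_rfl
  refine this.congr fun n => ?_
  rw [show (s : ℂ) / m * τ = s * ((τ : ℂ) / m) by ring]
  exact congrArg Inv.inv (zpow_ofNat _ 2)

/-- Coefficients of the first double series. -/
def fa1 (p : ℤ × ℕ) : ℚ := p.2
def fe1 (m : ℕ) (k : ℤ) (p : ℤ × ℕ) : ℕ := (p.1 * m + k).natAbs * p.2
def fa2 (p : ℤ × ℕ) : ℚ := if p.1 = 0 then 0 else p.2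

lemma fa1_le (p : ℤ × ℕ) : |fa1 p| ≤ p.2 := by simp [fa1]
lemma fa2_le (p : ℤ × ℕ) : |fa2 p| ≤ p.2 := by
  rw [fa2]; split_ifs <;> simp

lemma natAbs_aux (m : ℕ) (k l : ℤ) (h0 : 0 ≤ k) (hkm : k < m) :
    l.natAbs ≤ (l * m + k).natAbs := by
  rcases le_or_gt 0 l with h | h
  · have : l ≤ l * m + k := by nlinarith
    omega
  · have : l * m + k < l + 1 := by nlinarith
    omega

lemma exp_aux (s n t : ℕ) (hs : 0 < s) (hn : 0 < n) (ht : t ≤ s) : n + t ≤ s * n + 1 := by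
  nlinarith

lemma fe1_le (m : ℕ) (k : ℤ) (hk0 : 0 < k) (hkm : k < m) (p : ℤ × ℕ) (hp : fa1 p ≠ 0) :
    p.2 + p.1.natAbs ≤ fe1 m k p + 1 := by
  have hn : 0 < p.2 := by
    have : p.2 ≠ 0 := by simpa [fa1] using hp
    omega
  refine exp_aux _ _ _ ?_ hn (natAbs_aux m k p.1 hk0.le hkm)
  rw [Int.natAbs_pos]
  intro h
  have : (m : ℤ) ∣ k := ⟨-p.1, by linarith⟩
  have := Int.le_of_dvd hk0 this
  omega

lemma fe2_le (m : ℕ) (hm : 0 < m) (p : ℤ × ℕ) (hp : fa2 p ≠ 0) :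
    p.2 + p.1.natAbs ≤ fe1 m 0 p + 1 := by
  have h0 : p.1 ≠ 0 := by
    intro h; apply hp; simp [fa2, h]
  have hn : 0 < p.2 := by
    have : p.2 ≠ 0 := by
      intro h; apply hp; simp [fa2, h]
    omega
  refine exp_aux _ _ _ ?_ hn (natAbs_aux m 0 p.1 le_rfl (by exact_mod_cast hm))
  rw [Int.natAbs_pos, add_zero]
  exact mul_ne_zero h0 (by exact_mod_cast hm.ne')

/-- Expansion of `-(4π²)⁻¹ ℘((k/m)τ; L_τ)` in powers of `q^{1/m}`. -/
def psW (m : ℕ) (k : ℤ) : PowerSeries ℚ :=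
  psFam fa1 (fe1 m k) - (psFam fa2 (fe1 m 0) - PowerSeries.C (1 / 12 : ℚ))

section
variable {m : ℕ} {k : ℤ}

lemma psF1_conv (hk0 : 0 < k) (hkm : k < m) : PSConv (psFam fa1 (fe1 m k)) :=
  PSConv.of_punctured fun _ h0 h1 => (psFam_hasSum fa1_le (fe1_le m k hk0 hkm) h0 h1).summable

lemma psF2_conv (hm : 0 < m) : PSConv (psFam fa2 (fe1 m 0)) :=
  PSConv.of_punctured fun _ h0 h1 => (psFam_hasSum fa2_le (fe2_le m hm) h0 h1).summable

lemma psW_conv (hm : 0 < m) (hk0 : 0 < k) (hkm : k < m) : PSConv (psW m k) :=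
  (psF1_conv hk0 hkm).sub ((psF2_conv hm).sub (PSConv.const _))

lemma wp_expansion (hm : 0 < m) (hk0 : 0 < k) (hkm : k < m) (τ : ℍ) :
    wpC ((k : ℂ) / m * τ) τ = -4 * (π : ℂ) ^ 2 * psEval (psW m k) (qq m τ) := by
  have h0 := qq_ne m τ
  have h1 := norm_qq hm τ
  have hm0 : (m : ℂ) ≠ 0 := by exact_mod_cast hm.ne'
  rw [psW, psEval_sub (psF1_conv hk0 hkm) ((psF2_conv hm).sub (PSConv.const _)) h1,
    psEval_sub (psF2_conv hm) (PSConv.const _) h1, psEval_const]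
  rw [show psEval (psFam fa1 (fe1 m k)) (qq m τ) = _ from
    (psFam_hasSum fa1_le (fe1_le m k hk0 hkm) h0 h1).tsum_eq,
    show psEval (psFam fa2 (fe1 m 0)) (qq m τ) = _ from
    (psFam_hasSum fa2_le (fe2_le m hm) h0 h1).tsum_eq]
  have s1 := summable_fam fa1_le (fe1_le m k hk0 hkm) h0 h1
  have s2 := summable_fam fa2_le (fe2_le m hm) h0 h1
  -- the row sums
  have hw := hasSum_wp τ ((k : ℂ) / m * τ)
  rw [← (Equiv.neg (ℤ × ℤ)).hasSum_iff, ← wpC_eq] at hw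
  have hrow : ∀ l : ℤ, ∑' n : ℤ, ((fun p : ℤ × ℤ =>
      (((k : ℂ) / m * τ - lat τ p) ^ 2)⁻¹ - ((lat τ p) ^ 2)⁻¹) ∘ (Equiv.neg (ℤ × ℤ))) (l, n) =
      -4 * (π : ℂ) ^ 2 * (∑' n : ℕ, (fa1 (l, n) : ℂ) * qq m τ ^ (fe1 m k (l, n)) -
        (∑' n : ℕ, (fa2 (l, n) : ℂ) * qq m τ ^ (fe1 m 0 (l, n)) -
          if l = 0 then ((1 / 12 : ℚ) : ℂ) else 0)) := by
    intro l
    have e1 : ∀ n : ℤ, ((fun p : ℤ × ℤ =>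
      (((k : ℂ) / m * τ - lat τ p) ^ 2)⁻¹ - ((lat τ p) ^ 2)⁻¹) ∘ (Equiv.neg (ℤ × ℤ))) (l, n) =
      ((((l * m + k : ℤ) : ℂ) / m * τ + n) ^ 2)⁻¹ - ((((l * m : ℤ) : ℂ) / m * τ + n) ^ 2)⁻¹ := by
      intro n
      simp only [Function.comp, Equiv.neg_apply, lat, Prod.neg_mk]
      congr 2
      · congr 1
        push_cast
        field_simp
        ring
      · rw [← neg_sq]
        congr 1
        push_cast
        field_simp
        ring
    rw [tsum_congr e1, (row_summable τ m _).tsum_sub (row_summable τ m _)]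
    have hs1 : l * m + k ≠ 0 := by
      intro h
      have : (m : ℤ) ∣ k := ⟨-l, by linarith⟩
      have := Int.le_of_dvd hk0 this
      omega
    rw [row_ne hm τ hs1]
    by_cases hl : l = 0
    · subst hl
      have : ∀ n : ℤ, ((((0 * m : ℤ) : ℂ) / m * τ + n) ^ 2)⁻¹ = (((n : ℂ)) ^ 2)⁻¹ := by
        intro n; simp
      rw [tsum_congr this, row_zero]
      simp only [fa1, fe1, fa2]
      simp
      ring
    · rw [row_ne hm τ (s := l * m) (mul_ne_zero hl (by exact_mod_cast hm.ne'))]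
      simp [fa1, fe1, fa2, hl]
      ring
  have hp := hw.summable.hasSum.prod_fiberwise (fun l => (hw.summable.prod_factor l).hasSum)
  simp only [hrow] at hp
  rw [hw.tsum_eq] at hp
  have hr := ((s1.hasSum.prod_fiberwise (fun l => (s1.prod_factor l).hasSum)).sub
    ((s2.hasSum.prod_fiberwise (fun l => (s2.prod_factor l).hasSum)).sub
      (hasSum_ite_eq (0 : ℤ) ((1 / 12 : ℚ) : ℂ)))).mul_left (-4 * (π : ℂ) ^ 2)
  exact hp.unique hr

end

/-! ### Conclusion -/

lemma exists_rep (m : ℕ) (hm : 1 < m) (k : ℤ) (hk : ¬ (m : ℤ) ∣ k) :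
    ∃ P : PowerSeries ℚ, PSConv P ∧ ∀ τ : ℍ, fricke ((k : ℚ) / m, 0) τ =
      (qq m τ ^ m)⁻¹ * psEval P (qq m τ) := by
  have hm0 : 0 < m := by omega
  have hmz : (0 : ℤ) < m := by exact_mod_cast hm0
  have hmc : (m : ℂ) ≠ 0 := by exact_mod_cast hm0.ne'
  have hk0 : 0 < k % m := by
    have h1 := Int.emod_nonneg k hmz.ne'
    have h2 : k % m ≠ 0 := fun h => hk (Int.dvd_of_emod_eq_zero h)
    omega
  have hkm : k % m < m := Int.emod_lt_of_pos k hmz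
  have cW := psW_conv hm0 hk0 hkm
  have cG := PSConv.expand hm0 psG_conv
  refine ⟨PowerSeries.C (20736 : ℚ) * (psExpand m psG * psW m (k % m)),
    (PSConv.const _).mul (cG.mul cW), fun τ => ?_⟩
  have h1 := norm_qq hm0 τ
  rw [psEval_mul (PSConv.const _) (cG.mul cW) h1, psEval_mul cG cW h1, psEval_const,
    psEval_expand hm0 psG_conv h1, qq_pow hm0]
  have hz : wpC (((((k : ℚ) / m : ℚ)) : ℂ) * τ + ((0 : ℚ) : ℂ)) τ =
      -4 * (π : ℂ) ^ 2 * psEval (psW m (k % m)) (qq m τ) := by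
    rw [← wp_expansion hm0 hk0 hkm τ, ← wpC_add_lat τ (((k % m : ℤ) : ℂ) / m * τ) (k / m, 0)]
    congr 1
    have := Int.emod_add_mul_ediv k m
    have h : (k : ℂ) = ((k % m : ℤ) : ℂ) + m * ((k / m : ℤ) : ℂ) := by exact_mod_cast this.symm
    rw [lat]
    push_cast
    rw [h]
    field_simp
    ring
  simp only [fricke]
  rw [hz, gg_eq]
  have hpi : (π : ℂ) ≠ 0 := by exact_mod_cast Real.pi_ne_zero
  have hn := nome_ne τ
  push_cast
  field_simp
  ring

lemma mdiff_rep (m : ℕ) (hm : 0 < m) (P : PowerSeries ℚ) (hP : PSConv P) :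
    MDifferentiable 𝓘(ℂ) 𝓘(ℂ) fun τ : ℍ => (qq m τ ^ m)⁻¹ * psEval P (qq m τ) := by
  rw [UpperHalfPlane.mdifferentiable_iff]
  let F : ℂ → ℂ := fun z => Complex.exp (2 * (Real.pi : ℂ) * Complex.I *
    (((1 : ℤ) : ℂ) / (m : ℂ)) * z)
  have hF : Differentiable ℂ F := by fun_prop
  have hd : DifferentiableOn ℂ (fun z => (F z ^ m)⁻¹ * psEval P (F z)) {z : ℂ | 0 < z.im} := by
    refine DifferentiableOn.mul ?_ ?_
    · exact ((hF.pow m).differentiableOn).inv fun z _ => pow_ne_zero _ (Complex.exp_ne_zero _)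
    · refine hP.differentiableOn.comp hF.differentiableOn ?_
      intro z hz
      rw [mem_ball_zero_iff]
      exact norm_qq hm ⟨z, hz⟩
  refine hd.congr fun z hz => ?_
  simp only [Function.comp]
  have : ((UpperHalfPlane.ofComplex z : ℍ) : ℂ) = z := by
    rw [UpperHalfPlane.ofComplex_apply_of_im_pos hz]
  simp only [qq, qpow, this, F]

/-- for `k ∈ ℤ ∖ mℤ`, the Fricke function `f_{(k/m,0)}` is
holomorphic on `ℍ`, invariant under `Γ^1(m)`, and has rational Fourier
coefficients in its `q^{1/m}`-expansion. -/
theorem statement10 (m : ℕ) (hm : 1 < m) (k : ℤ) (hk : ¬ (m : ℤ) ∣ k) :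
    MDifferentiable 𝓘(ℂ) 𝓘(ℂ) (fricke ((k : ℚ) / m, 0)) ∧
    (∀ γ : SL(2, ℤ), GammaUpper m γ →
      ∀ τ : ℍ, fricke ((k : ℚ) / m, 0) (γ • τ) = fricke ((k : ℚ) / m, 0) τ) ∧
    (∃ n₀ : ℤ, ∃ c : ℕ → ℚ, ∀ τ : ℍ,
      HasSum (fun n : ℕ => (c n : ℂ) * qpow m (n₀ + n) τ)
        (fricke ((k : ℚ) / m, 0) τ)) := by
  obtain ⟨P, hP, h⟩ := exists_rep m hm k hk
  refine ⟨?_, fun γ hγ τ => fricke_inv m hm k γ hγ τ, -(m : ℤ),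
    fun n => PowerSeries.coeff n P, fun τ => ?_⟩
  · rw [show fricke ((k : ℚ) / m, 0) = _ from funext h]
    exact mdiff_rep m (by omega) P hP
  · rw [h τ]
    refine (hasSum_congr_aux fun n => ?_).mpr
      ((hP.hasSum (norm_qq (by omega) τ)).mul_left ((qq m τ ^ m)⁻¹))
    rw [qpow_eq, zpow_add₀ (qq_ne m τ), _root_.zpow_neg, zpow_natCast, zpow_natCast]
    ring
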